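/- arXiv:2110.11812 — 4 statements merged into one kernel-verified Lean document; each statement's English description precedes it below -/
import Mathlib

section
/- Fix d ≥ 1, real numbers s_1, …, s_d > 0 and z_1, …, z_d with z_i ≠ 0 for all i. Define the likelihood L(γ) = ∏_{i=1}^d (2π γ_i s_i)^{-1/2} · exp(-z_i² / (2 γ_i s_i)) for γ ∈ (0,∞)^d. Then L attains its strict global maximum over (0,∞)^d exactly at the point γ̂ with γ̂_i = z_i² / s_i for each i. -/
open Real

/-!
The likelihood factorises, so it suffices to maximise each one-dimensional Gaussian density
over its variance `v`. With `u = (x - μ) ^ 2 / v`, the square of the density at `x` is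
`u * exp (-u)` up to a factor independent of `v`, and `u * exp (-u)` has its strict maximum
at `u = 1`.
-/

section GaussianVariance

open ProbabilityTheory
open scoped NNReal

theorem mul_exp_neg_lt_exp_neg_one {u : ℝ} (hu : u ≠ 1) : u * exp (-u) < exp (-1) := by
  have lt_exp : u < exp (u - 1) := by
    simpa using add_one_lt_exp (sub_ne_zero.mpr hu)
  calc
    u * exp (-u) < exp (u - 1) * exp (-u) := by gcongr
    _ = exp (-1) := by rw [← exp_add]; congr 1; ring

theorem two_pi_mul_sq_mul_gaussianPDFReal_sq (μ : ℝ) (v : ℝ≥0) (x : ℝ) :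
    2 * π * (x - μ) ^ 2 * gaussianPDFReal μ v x ^ 2 =
      (x - μ) ^ 2 / v * exp (-((x - μ) ^ 2 / v)) := by
  have sq_normalization : (√(2 * π * v))⁻¹ ^ 2 = (2 * π * v)⁻¹ := by
    rw [inv_pow, sq_sqrt (by positivity)]
  have sq_exp : exp (-(x - μ) ^ 2 / (2 * v)) ^ 2 = exp (-((x - μ) ^ 2 / v)) := by
    rw [← exp_nat_mul]
    congr 1
    field
  rw [gaussianPDFReal, mul_pow, sq_normalization, sq_exp]
  field

theorem gaussianPDFReal_lt_gaussianPDFReal_nnnorm_sub_sq {μ x : ℝ} {v : ℝ≥0} (hx : x ≠ μ)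
    (hv : v ≠ ‖x - μ‖₊ ^ 2) :
    gaussianPDFReal μ v x < gaussianPDFReal μ (‖x - μ‖₊ ^ 2) x := by
  have sq_pos : 0 < (x - μ) ^ 2 := sq_pos_of_ne_zero (sub_ne_zero.mpr hx)
  have coe_nnnorm_sub_sq : ((‖x - μ‖₊ ^ 2 : ℝ≥0) : ℝ) = (x - μ) ^ 2 := by simp
  have ratio_ne_one : (x - μ) ^ 2 / v ≠ 1 := fun h ↦
    hv (NNReal.coe_injective (coe_nnnorm_sub_sq ▸ (eq_of_div_eq_one h).symm))
  have sq_lt_sq : 2 * π * (x - μ) ^ 2 * gaussianPDFReal μ v x ^ 2 <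
      2 * π * (x - μ) ^ 2 * gaussianPDFReal μ (‖x - μ‖₊ ^ 2) x ^ 2 := by
    rw [two_pi_mul_sq_mul_gaussianPDFReal_sq, two_pi_mul_sq_mul_gaussianPDFReal_sq,
      coe_nnnorm_sub_sq, div_self sq_pos.ne', one_mul]
    exact mul_exp_neg_lt_exp_neg_one ratio_ne_one
  exact lt_of_pow_lt_pow_left₀ 2 (gaussianPDFReal_nonneg μ _ x)
    (lt_of_mul_lt_mul_left sq_lt_sq (by positivity))

theorem prod_gaussianPDFReal_lt_prod_gaussianPDFReal_nnnorm_sub_sq {ι : Type*} [Fintype ι]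
    {μ x : ι → ℝ} {v : ι → ℝ≥0} (hx : ∀ i, x i ≠ μ i) (hv : ∀ i, v i ≠ 0)
    (hne : v ≠ fun i ↦ ‖x i - μ i‖₊ ^ 2) :
    ∏ i, gaussianPDFReal (μ i) (v i) (x i) <
      ∏ i, gaussianPDFReal (μ i) (‖x i - μ i‖₊ ^ 2) (x i) := by
  obtain ⟨j, hj⟩ := Function.ne_iff.mp hne
  refine Finset.prod_lt_prod (fun i _ ↦ gaussianPDFReal_pos _ _ _ (hv i)) (fun i _ ↦ ?_)
    ⟨j, Finset.mem_univ j, gaussianPDFReal_lt_gaussianPDFReal_nnnorm_sub_sq (hx j) hj⟩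
  obtain h | h := eq_or_ne (v i) (‖x i - μ i‖₊ ^ 2)
  · rw [h]
  · exact (gaussianPDFReal_lt_gaussianPDFReal_nnnorm_sub_sq (hx i) h).le

theorem gaussianPDFReal_eq_rpow_mul_exp (μ : ℝ) (v : ℝ≥0) (x : ℝ) :
    gaussianPDFReal μ v x =
      (2 * π * v) ^ (-(1 : ℝ) / 2) * exp (-(x - μ) ^ 2 / (2 * v)) := by
  rw [gaussianPDFReal, neg_div 2 (1 : ℝ), rpow_neg (by positivity), sqrt_eq_rpow]

end GaussianVariance

/-- The Gaussian quasi-likelihood with diagonal covariance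
`diag(γ_i s_i)` attains its strict global maximum over `(0,∞)^d` exactly at
`γ̂_i = z_i² / s_i` (Proposition 1: time-varying, vector-valued diffusion). -/
theorem quasi_mle_vector_valued_time_varying (d : ℕ) (hd : 1 ≤ d)
    (s z : Fin d → ℝ) (hs : ∀ i, 0 < s i) (hz : ∀ i, z i ≠ 0) :
    ∀ γ : Fin d → ℝ, (∀ i, 0 < γ i) → γ ≠ (fun i => (z i) ^ 2 / s i) →
      (∏ i, (2 * π * γ i * s i) ^ (-(1 : ℝ) / 2) *
          Real.exp (-(z i) ^ 2 / (2 * γ i * s i)))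
        < ∏ i, (2 * π * ((z i) ^ 2 / s i) * s i) ^ (-(1 : ℝ) / 2) *
          Real.exp (-(z i) ^ 2 / (2 * ((z i) ^ 2 / s i) * s i)) := by
  intro γ hγ hne
  have variance_pos (i) : 0 < γ i * s i := mul_pos (hγ i) (hs i)
  have coe_variance (i) : ((γ i * s i).toNNReal : ℝ) = γ i * s i :=
    coe_toNNReal _ (variance_pos i).le
  have optimal_variance (i) : z i ^ 2 / s i * s i = z i ^ 2 := div_mul_cancel₀ _ (hs i).ne'
  have variance_ne : (fun i ↦ (γ i * s i).toNNReal) ≠ fun i ↦ ‖z i - 0‖₊ ^ 2 := by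
    refine fun h ↦ hne (funext fun i ↦ (eq_div_iff (hs i).ne').mpr ?_)
    simpa [coe_variance] using congrArg NNReal.toReal (congrFun h i)
  have prod_lt := prod_gaussianPDFReal_lt_prod_gaussianPDFReal_nnnorm_sub_sq hz
    (fun i ↦ (toNNReal_pos.mpr (variance_pos i)).ne') variance_ne
  simpa [gaussianPDFReal_eq_rpow_mul_exp, coe_variance, optimal_variance, mul_assoc] using prod_lt
end

section
/- Let S be a symmetric positive-definite d×d real matrix and z ∈ ℝ^d with z ≠ 0. Define L(c) = (2π)^{-d/2} (det(c • S))^{-1/2} exp(- zᵀ (c • S)⁻¹ z / 2) for c > 0, where c • S denotes the scalar multiple of S. Then L attains its strict global maximum over (0,∞) exactly at ĉ = (zᵀ S⁻¹ z) / d. -/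
open Real Matrix

/-!
Write `q = zᵀ S⁻¹ z`. Up to a factor independent of `c`, the density is
`exp (-(d log c + q / c) / 2)`, so it suffices to minimise `d log c + q / c`; comparing the values
at `c` and at `ĉ = q / d` reduces this to `log x < x - 1` at `x = ĉ / c ≠ 1`.
-/

theorem mul_log_add_div_lt_of_ne {a q c : ℝ} (ha : 0 < a) (hq : 0 < q) (hc : 0 < c)
    (hne : c ≠ q / a) :
    a * log (q / a) + q / (q / a) < a * log c + q / c := by
  have hquot : 0 < q / a := div_pos hq ha
  have hratio : q / a / c ≠ 1 := fun h => hne ((div_eq_one_iff_eq hc.ne').mp h).symm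
  have hlog : log (q / a) - log c < q / a / c - 1 := by
    rw [← log_div hquot.ne' hc.ne']
    exact log_lt_sub_one_of_pos (div_pos hquot hc) hratio
  calc a * log (q / a) + q / (q / a)
      = a * log c + a * (log (q / a) - log c) + a := by rw [div_div_cancel₀ hq.ne']; ring
    _ < a * log c + a * (q / a / c - 1) + a := by gcongr
    _ = a * log c + q / c := by field_simp; ring

section GaussianDensity

variable {ι : Type*} [Fintype ι] [DecidableEq ι]

/-- The density at `z` of the centred Gaussian on `ℝ^ι` with covariance matrix `S`. It
is given by its closed formula for every matrix `S`; this is a probability density when `S` is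
positive definite, and involves the junk values of `⁻¹` and of real powers when `det S ≤ 0`. -/
noncomputable def gaussianDensity (S : Matrix ι ι ℝ) (z : ι → ℝ) : ℝ :=
  (2 * π) ^ (-(Fintype.card ι : ℝ) / 2) * S.det ^ (-(1 : ℝ) / 2) *
    exp (-(z ⬝ᵥ (S⁻¹ *ᵥ z)) / 2)

theorem gaussianDensity_smul {S : Matrix ι ι ℝ} (hS : 0 < S.det) (z : ι → ℝ) {c : ℝ}
    (hc : 0 < c) :
    gaussianDensity (c • S) z =
      (2 * π) ^ (-(Fintype.card ι : ℝ) / 2) * S.det ^ (-(1 : ℝ) / 2) *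
        exp (-(Fintype.card ι * log c + (z ⬝ᵥ (S⁻¹ *ᵥ z)) / c) / 2) := by
  have hquad : z ⬝ᵥ ((c • S)⁻¹ *ᵥ z) = (z ⬝ᵥ (S⁻¹ *ᵥ z)) / c := by
    have hinv : (c • S)⁻¹ = c⁻¹ • S⁻¹ := S.inv_smul' (Units.mk0 c hc.ne') hS.ne'.isUnit
    rw [hinv, smul_mulVec, dotProduct_smul, smul_eq_mul, inv_mul_eq_div]
  have hdet : (c • S).det ^ (-(1 : ℝ) / 2) =
      S.det ^ (-(1 : ℝ) / 2) * exp (-(Fintype.card ι * log c) / 2) := by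
    rw [det_smul, mul_rpow (by positivity) hS.le, rpow_def_of_pos (pow_pos hc _), log_pow, mul_comm]
    congr 2
    ring
  rw [gaussianDensity, hquad, hdet, neg_add, add_div, exp_add]
  ring

theorem quasi_mle_scalar_diffusion_general {S : Matrix ι ι ℝ} (hS : 0 < S.det) {z : ι → ℝ}
    (hz : 0 < z ⬝ᵥ (S⁻¹ *ᵥ z)) {c : ℝ} (hc : 0 < c)
    (hne : c ≠ (z ⬝ᵥ (S⁻¹ *ᵥ z)) / Fintype.card ι) :
    gaussianDensity (c • S) z <
      gaussianDensity (((z ⬝ᵥ (S⁻¹ *ᵥ z)) / Fintype.card ι) • S) z := by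
  have hcard : (0 : ℝ) < Fintype.card ι := by
    rcases isEmpty_or_nonempty ι with _ | _
    · simp at hz
    · exact_mod_cast Fintype.card_pos
  rw [gaussianDensity_smul hS z hc, gaussianDensity_smul hS z (div_pos hz hcard)]
  have hexponent := mul_log_add_div_lt_of_ne hcard hz hc hne
  gcongr

end GaussianDensity

/-- For a symmetric positive-definite `S` and `z ≠ 0`, the Gaussian
density `L(c) = (2π)^{-d/2} det(c•S)^{-1/2} exp(-zᵀ(c•S)⁻¹z/2)` attains its
strict global maximum over `(0,∞)` exactly at `ĉ = (zᵀ S⁻¹ z)/d`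
(time-varying scalar-diffusion quasi-MLE, Eq. (18)). -/
theorem quasi_mle_scalar_diffusion (d : ℕ) (hd : 1 ≤ d)
    (S : Matrix (Fin d) (Fin d) ℝ) (hS : S.PosDef)
    (z : Fin d → ℝ) (hz : z ≠ 0) :
    ∀ c : ℝ, 0 < c → c ≠ (z ⬝ᵥ (S⁻¹ *ᵥ z)) / d →
      (2 * π) ^ (-(d : ℝ) / 2) * (Matrix.det (c • S)) ^ (-(1 : ℝ) / 2) *
          Real.exp (-(z ⬝ᵥ ((c • S)⁻¹ *ᵥ z)) / 2)
        < (2 * π) ^ (-(d : ℝ) / 2) *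
            (Matrix.det (((z ⬝ᵥ (S⁻¹ *ᵥ z)) / d) • S)) ^ (-(1 : ℝ) / 2) *
            Real.exp (-(z ⬝ᵥ ((((z ⬝ᵥ (S⁻¹ *ᵥ z)) / d) • S)⁻¹ *ᵥ z)) / 2) := by
  intro c hc
  simpa [gaussianDensity] using quasi_mle_scalar_diffusion_general hS.det_pos
    (by simpa using hS.inv.dotProduct_mulVec_pos hz) hc
end

section
/- Let Γ be an invertible d×d real matrix, C̆ a (ν+1)×(ν+1) real matrix, e_1 ∈ ℝ^{ν+1} the basis vector with index 1 regarded as a (ν+1)×1 matrix, and suppose s := e_1ᵀ C̆ e_1 ≠ 0 (as a real number). Then the Kalman gain K := (Γ ⊗ C̆)(I_d ⊗ e_1) · ((s • Γ)⁻¹) equals I_d ⊗ (s⁻¹ • (C̆ e_1)); in particular K is a Kronecker product with identity left factor, independent of Γ. -/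
open Matrix Kronecker

/-- The standard basis vector `e_1 ∈ ℝ^{ν+1}` (indices `0,…,ν`), regarded as a
`(ν+1)×1` matrix. -/
def e1col (ν : ℕ) : Matrix (Fin (ν + 1)) (Fin 1) ℝ :=
  Matrix.of fun q _ => if q = 1 then 1 else 0

section KalmanGain

variable {R m n k l p : Type*} [CommRing R] [Fintype m] [DecidableEq m] [Fintype n]

theorem kronecker_mul_one_kronecker_mul_inv_kronecker [Fintype l] {Γ : Matrix m m R}
    (hΓ : IsUnit Γ.det) (C : Matrix k n R) (E : Matrix n l R) (D : Matrix l p R) :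
    (Γ ⊗ₖ C) * ((1 : Matrix m m R) ⊗ₖ E) * (Γ⁻¹ ⊗ₖ D) = (1 : Matrix m m R) ⊗ₖ (C * E * D) := by
  rw [← mul_kronecker_mul, ← mul_kronecker_mul, Matrix.mul_one, mul_nonsing_inv Γ hΓ]

theorem inv_units_smul_kronecker {Γ : Matrix m m R} (hΓ : IsUnit Γ.det) (s : Rˣ)
    (D : Matrix l p R) : (s • Γ)⁻¹ ⊗ₖ D = Γ⁻¹ ⊗ₖ (s⁻¹ • D) := by
  rw [inv_smul' Γ s hΓ, smul_kronecker, kronecker_smul]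

theorem ek0_kalman_gain_kronecker_general [Fintype l] [DecidableEq l] {Γ : Matrix m m R}
    (hΓ : IsUnit Γ.det) (s : Rˣ) (C : Matrix k n R) (E : Matrix n l R) :
    (Γ ⊗ₖ C) * ((1 : Matrix m m R) ⊗ₖ E) * ((s • Γ)⁻¹ ⊗ₖ (1 : Matrix l l R)) =
      (1 : Matrix m m R) ⊗ₖ (s⁻¹ • (C * E)) := by
  rw [inv_units_smul_kronecker hΓ, kronecker_mul_one_kronecker_mul_inv_kronecker hΓ,
    Matrix.mul_smul, Matrix.mul_one]

end KalmanGain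

/-- For invertible `Γ` and `s := e_1ᵀ C̆ e_1 ≠ 0`, the EK0 Kalman
gain `K = (Γ ⊗ C̆)(I_d ⊗ e_1)(s • Γ)⁻¹` equals `I_d ⊗ (s⁻¹ • C̆ e_1)`: it is a
Kronecker product with identity left factor, independent of `Γ`
(step (v) of the proof of Proposition 3). -/
theorem ek0_kalman_gain_kronecker (d ν : ℕ) (hd : 1 ≤ d) (hν : 1 ≤ ν)
    (Γ : Matrix (Fin d) (Fin d) ℝ) (hΓ : IsUnit Γ.det)
    (C : Matrix (Fin (ν + 1)) (Fin (ν + 1)) ℝ)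
    (hs : ((e1col ν)ᵀ * C * e1col ν) 0 0 ≠ 0) :
    (Γ ⊗ₖ C) * ((1 : Matrix (Fin d) (Fin d) ℝ) ⊗ₖ e1col ν) *
        (((((e1col ν)ᵀ * C * e1col ν) 0 0) • Γ)⁻¹ ⊗ₖ (1 : Matrix (Fin 1) (Fin 1) ℝ))
      = (1 : Matrix (Fin d) (Fin d) ℝ) ⊗ₖ
          (((((e1col ν)ᵀ * C * e1col ν) 0 0)⁻¹) • (C * e1col ν)) :=
  ek0_kalman_gain_kronecker_general hΓ (Units.mk0 _ hs) C (e1col ν)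
end

section
/- Fix d ≥ 1 and m ≥ 1. For each i = 1,…,d let C_i be a symmetric m×m real matrix, H_i a 1×m real matrix (a row vector), z_i a real number, and m_i ∈ ℝ^m, and suppose s_i := H_i C_i H_iᵀ ≠ 0 (as a real number). Let C = blockDiagonal(C_1,…,C_d), let H be the block-diagonal matrix with 1×m diagonal blocks H_1,…,H_d, let S := H C Hᵀ (a d×d diagonal matrix with entries s_i), let z = (z_1,…,z_d) ∈ ℝ^d and m = (m_1,…,m_d) ∈ ℝ^{dm}. Then the corrected mean m - C Hᵀ S⁻¹ z decomposes blockwise: its i-th block equals m_i - (z_i / s_i) • (C_i H_iᵀ), and the Joseph factor Ξ := I - C Hᵀ S⁻¹ H equals blockDiagonal(Ξ_1,…,Ξ_d) with Ξ_i = I_m - (1/s_i) • (C_i H_iᵀ H_i), so that Ξ C Ξᵀ = blockDiagonal(Ξ_1 C_1 Ξ_1ᵀ, …, Ξ_d C_d Ξ_dᵀ). -/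
open Matrix

/-!
Transposes, products and inverses of block-diagonal matrices are taken block by block, hence so are
the Kalman gain `K = C Hᵀ S⁻¹` and the Joseph factor `1 - K H`. When each block measures a single
scalar, `S_i` is a `1 × 1` matrix and inverting it is division by its entry `s_i`.
-/

section BlockDiagonal

variable {ι m n R : Type*} [DecidableEq ι] [Fintype ι]

theorem blockDiagonal_mulVec_apply [Fintype n] [NonUnitalNonAssocSemiring R]
    (M : ι → Matrix m n R) (v : n × ι → R) (p : m × ι) :
    (blockDiagonal M *ᵥ v) p = (M p.2 *ᵥ fun k => v (k, p.2)) p.1 := by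
  simp only [mulVec, dotProduct, Fintype.sum_prod_type, blockDiagonal_apply, ite_mul, zero_mul,
    Finset.sum_ite_eq, Finset.mem_univ, if_true]

theorem inv_blockDiagonal [Fintype n] [DecidableEq n] [CommRing R] {M : ι → Matrix n n R}
    (hM : ∀ i, IsUnit (M i)) : (blockDiagonal M)⁻¹ = blockDiagonal fun i => (M i)⁻¹ := by
  apply inv_eq_right_inv
  rw [← blockDiagonal_mul, ← blockDiagonal_one]
  exact congrArg blockDiagonal <| funext fun i =>
    mul_nonsing_inv _ ((isUnit_iff_isUnit_det _).mp (hM i))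

end BlockDiagonal

noncomputable section Kalman

variable {ι m n R : Type*} [Fintype m] [Fintype n] [DecidableEq m]

/-- The Kalman gain `C Hᵀ S⁻¹`, where `S = H C Hᵀ`, for a noiseless linear measurement `H` of a
state with covariance `C`. It is the usual gain only when `S` is invertible, as the inverse of a
singular matrix is `0` by convention. -/
def kalmanGain [CommRing R] (C : Matrix n n R) (H : Matrix m n R) : Matrix n m R :=
  C * Hᵀ * (H * C * Hᵀ)⁻¹

/-- The Joseph factor `Ξ = 1 - K H`, with `K` the Kalman gain: the corrected covariance in Joseph
form is `Ξ C Ξᵀ`. -/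
def josephFactor [DecidableEq n] [CommRing R] (C : Matrix n n R) (H : Matrix m n R) :
    Matrix n n R :=
  1 - kalmanGain C H * H

theorem kalmanGain_blockDiagonal [DecidableEq ι] [Fintype ι] [CommRing R]
    {C : ι → Matrix n n R} {H : ι → Matrix m n R} (hS : ∀ i, IsUnit (H i * C i * (H i)ᵀ)) :
    kalmanGain (blockDiagonal C) (blockDiagonal H) =
      blockDiagonal fun i => kalmanGain (C i) (H i) := by
  simp only [kalmanGain, blockDiagonal_transpose, blockDiagonal_mul, ← inv_blockDiagonal hS]

theorem josephFactor_blockDiagonal [DecidableEq ι] [Fintype ι] [DecidableEq n] [CommRing R]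
    {C : ι → Matrix n n R} {H : ι → Matrix m n R} (hS : ∀ i, IsUnit (H i * C i * (H i)ᵀ)) :
    josephFactor (blockDiagonal C) (blockDiagonal H) =
      blockDiagonal fun i => josephFactor (C i) (H i) := by
  rw [josephFactor, kalmanGain_blockDiagonal hS, ← blockDiagonal_mul, ← blockDiagonal_one,
    ← blockDiagonal_sub]
  rfl

theorem blockwise_kalman_correction_general [DecidableEq ι] [Fintype ι] [DecidableEq n]
    [CommRing R] {C : ι → Matrix n n R} {H : ι → Matrix m n R}
    (hS : ∀ i, IsUnit (H i * C i * (H i)ᵀ)) (z : m × ι → R) (μ : n × ι → R) :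
    (∀ i q, (μ - kalmanGain (blockDiagonal C) (blockDiagonal H) *ᵥ z) (q, i) =
      μ (q, i) - (kalmanGain (C i) (H i) *ᵥ fun k => z (k, i)) q) ∧
    josephFactor (blockDiagonal C) (blockDiagonal H) =
      blockDiagonal (fun i => josephFactor (C i) (H i)) ∧
    josephFactor (blockDiagonal C) (blockDiagonal H) * blockDiagonal C *
        (josephFactor (blockDiagonal C) (blockDiagonal H))ᵀ =
      blockDiagonal fun i => josephFactor (C i) (H i) * C i * (josephFactor (C i) (H i))ᵀ := by
  refine ⟨fun i q => ?_, josephFactor_blockDiagonal hS, ?_⟩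
  · rw [kalmanGain_blockDiagonal hS, Pi.sub_apply, blockDiagonal_mulVec_apply]
  · rw [josephFactor_blockDiagonal hS, blockDiagonal_transpose, ← blockDiagonal_mul,
      ← blockDiagonal_mul]

end Kalman

section ScalarMeasurement

variable {m n R K : Type*} [Unique m] [Fintype m] [DecidableEq m] [Fintype n]
  [CommRing R] [Field K]

theorem isUnit_iff_of_unique {A : Matrix m m R} : IsUnit A ↔ IsUnit (A default default) := by
  rw [isUnit_iff_isUnit_det, det_unique]

theorem inv_eq_smul_one_of_unique (A : Matrix m m K) : A⁻¹ = (A default default)⁻¹ • 1 := by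
  rw [inv_def, det_unique, Ring.inverse_eq_inv', adjugate_subsingleton]

variable (C : Matrix n n K) (H : Matrix m n K)

theorem kalmanGain_of_unique :
    kalmanGain C H = ((H * C * Hᵀ) default default)⁻¹ • (C * Hᵀ) := by
  rw [kalmanGain, inv_eq_smul_one_of_unique, Matrix.mul_smul, Matrix.mul_one]

theorem kalmanGain_mulVec_of_unique (w : m → K) (q : n) :
    (kalmanGain C H *ᵥ w) q =
      w default / (H * C * Hᵀ) default default * (C * Hᵀ) q default := by
  rw [kalmanGain_of_unique, smul_mulVec, Pi.smul_apply, mulVec, dotProduct, Fintype.sum_unique,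
    smul_eq_mul]
  ring

theorem josephFactor_of_unique [DecidableEq n] :
    josephFactor C H = 1 - ((H * C * Hᵀ) default default)⁻¹ • (C * Hᵀ * H) := by
  rw [josephFactor, kalmanGain_of_unique, Matrix.smul_mul]

end ScalarMeasurement

/-- Steps (v)–(vi) of the proof of Proposition 2: with
block-diagonal covariance `C = blockDiagonal(C_1,…,C_d)` and block-diagonal
measurement matrix `H` with `1×m` blocks `H_i`, and `s_i = H_i C_i H_iᵀ ≠ 0`,
the Kalman mean correction `m - C Hᵀ S⁻¹ z` decomposes blockwise as
`m_i - (z_i/s_i) • (C_i H_iᵀ)`, the Joseph factor `Ξ = I - C Hᵀ S⁻¹ H` is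
block diagonal with blocks `Ξ_i = I - s_i⁻¹ • (C_i H_iᵀ H_i)`, and
`Ξ C Ξᵀ = blockDiagonal(Ξ_1 C_1 Ξ_1ᵀ, …, Ξ_d C_d Ξ_dᵀ)`. -/
theorem blockwise_kalman_correction (d m : ℕ) (hd : 1 ≤ d) (hm : 1 ≤ m)
    (C : Fin d → Matrix (Fin m) (Fin m) ℝ) (hC : ∀ i, (C i)ᵀ = C i)
    (H : Fin d → Matrix (Fin 1) (Fin m) ℝ)
    (z : Fin d → ℝ) (mv : Fin d → Fin m → ℝ)
    (hs : ∀ i, (H i * C i * (H i)ᵀ) 0 0 ≠ 0) :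
    (∀ (i : Fin d) (q : Fin m),
      ((fun p : Fin m × Fin d => mv p.2 p.1) -
          (Matrix.blockDiagonal C * (Matrix.blockDiagonal H)ᵀ *
              (Matrix.blockDiagonal H * Matrix.blockDiagonal C *
                (Matrix.blockDiagonal H)ᵀ)⁻¹) *ᵥ
            (fun p : Fin 1 × Fin d => z p.2)) (q, i)
        = mv i q - (z i / (H i * C i * (H i)ᵀ) 0 0) * (C i * (H i)ᵀ) q 0) ∧
    (1 - Matrix.blockDiagonal C * (Matrix.blockDiagonal H)ᵀ *
          (Matrix.blockDiagonal H * Matrix.blockDiagonal C *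
            (Matrix.blockDiagonal H)ᵀ)⁻¹ * Matrix.blockDiagonal H
      = Matrix.blockDiagonal (fun i =>
          1 - (((H i * C i * (H i)ᵀ) 0 0)⁻¹) • (C i * (H i)ᵀ * H i))) ∧
    ((1 - Matrix.blockDiagonal C * (Matrix.blockDiagonal H)ᵀ *
            (Matrix.blockDiagonal H * Matrix.blockDiagonal C *
              (Matrix.blockDiagonal H)ᵀ)⁻¹ * Matrix.blockDiagonal H) *
          Matrix.blockDiagonal C *
          (1 - Matrix.blockDiagonal C * (Matrix.blockDiagonal H)ᵀ *
              (Matrix.blockDiagonal H * Matrix.blockDiagonal C *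
                (Matrix.blockDiagonal H)ᵀ)⁻¹ * Matrix.blockDiagonal H)ᵀ
      = Matrix.blockDiagonal (fun i =>
          (1 - (((H i * C i * (H i)ᵀ) 0 0)⁻¹) • (C i * (H i)ᵀ * H i)) * C i *
            (1 - (((H i * C i * (H i)ᵀ) 0 0)⁻¹) • (C i * (H i)ᵀ * H i))ᵀ)) := by
  have h := blockwise_kalman_correction_general
    (fun i => isUnit_iff_of_unique.mpr (hs i).isUnit) (fun p => z p.2) (fun p => mv p.2 p.1)
  simp only [kalmanGain_mulVec_of_unique, josephFactor_of_unique] at h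
  exact h
end
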